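/- Let λ be a partition with at most q parts, where q ≥ 1 is an integer. Then the number of semistandard Young tableaux of shape λ with entries in {1,…,q} equals ∏_{(i,j)∈λ} (q + j − i) / h^λ_{ij}, which equals (q)_λ / h^λ. -/

import Mathlib

open MeasureTheory Filter Real
open scoped BigOperators Topology

noncomputable section

/-- Hook length of the (0-indexed) cell `c` in the Young diagram `μ`. -/
def hookLen (μ : YoungDiagram) (c : ℕ × ℕ) : ℕ :=
  μ.rowLen c.1 + μ.colLen c.2 - c.1 - c.2 - 1

/-- Product of all hook lengths of `μ`. -/
def hookProd (μ : YoungDiagram) : ℕ := ∏ c ∈ μ.cells, hookLen μ c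

/-- Number of semistandard Young tableaux of shape `μ` with entries in `{0, …, q-1}`. -/
def numSSYT (μ : YoungDiagram) (q : ℕ) : ℕ :=
  Set.ncard {T : SemistandardYoungTableau μ | ∀ c ∈ μ.cells, T c.1 c.2 < q}

/-- Number of standard Young tableaux of shape `μ`, via the hook length formula. -/
def fSYT (μ : YoungDiagram) : ℝ := (Nat.factorial μ.card : ℝ) / (hookProd μ : ℝ)

/-- The probability `P^{ℓ,p}` of a partition `μ` of `ℓ`. -/
def Pword (ℓ p : ℕ) (μ : YoungDiagram) : ℝ :=
  fSYT μ * (numSSYT μ p : ℝ) / (p : ℝ) ^ ℓ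

/-- The expectation `E^{ℓ,p}` of a function `g` of the partition. -/
def Eword (ℓ p : ℕ) (g : YoungDiagram → ℝ) : ℝ :=
  ∑' μ : YoungDiagram, if μ.card = ℓ then Pword ℓ p μ * g μ else 0

/-- The expectation `E_{x,p}` with respect to the Poissonized measure `P_{x,p}`. -/
def Epois (x : ℝ) (p : ℕ) (g : YoungDiagram → ℝ) : ℝ :=
  ∑' μ : YoungDiagram,
    Real.exp (-(p * x)) * (p * x) ^ μ.card / (Nat.factorial μ.card : ℝ) *
      Pword μ.card p μ * g μ

/-- Pochhammer symbol `(x)_m = x (x+1) ⋯ (x+m-1)`. -/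
def pochRe (x : ℝ) (m : ℕ) : ℝ := ∏ j ∈ Finset.range m, (x + j)

/-- `(x)_κ = ∏_i (x + 1 - i)_{κ_i}` (with `i` 1-indexed). -/
def pochPart (x : ℝ) (μ : YoungDiagram) : ℝ :=
  ∏ i ∈ Finset.range (μ.colLen 0), pochRe (x - i) (μ.rowLen i)

/-- Strip hook product `H(λ) = ∏_{(i,j) ∈ λ, n-q < j ≤ n-p} h^λ_{ij}` (1-indexed `j`). -/
def Hstrip (n p q : ℕ) (μ : YoungDiagram) : ℕ :=
  ∏ c ∈ μ.cells.filter (fun c => n - q ≤ c.2 ∧ c.2 < n - p), hookLen μ c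

/-- The indicator `1_{λ ⊇ (n-p)^p}`. -/
def indSup (n p : ℕ) (μ : YoungDiagram) : ℝ :=
  if ∀ i < p, n - p ≤ μ.rowLen i then 1 else 0

/-- Vandermonde determinant `Δ_p(x) = ∏_{i<j} (x_i - x_j)`. -/
def vdm {p : ℕ} (x : Fin p → ℝ) : ℝ :=
  ∏ i : Fin p, ∏ j ∈ Finset.Ioi i, (x i - x j)

/-! Deleting the cells of a tableau that hold its largest letter leaves a tableau whose shape
interlaces with the original one, and every interlacing shape arises. The Vandermonde determinant
of the points `i - μ_i` obeys the same recursion up to a factorial: written in falling factorials,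
its successive row differences telescope to sums over interlacing rows. Hence the number of tableaux
with letters below `q`, times `∏_{k < q} k!`, is that determinant.

The determinant is then compared with hooks and contents one row at a time: the hook lengths of
row `i` together with the factors `(k - μ_k) - (i - μ_i)`, `i < k < q`, multiply to
`(μ_i + q - 1 - i)!`, and so do the factors `q + j - i` of row `i` together with `(q - 1 - i)!`.
When `μ` has more than `q` rows, there is no tableau, and the content factor of the cell `(q, 0)`
vanishes. -/

open scoped Nat

section Determinants

variable {R : Type*} [CommRing R]

lemma descPochhammer_eval_add_one_sub (n : ℕ) (x : R) :
    (descPochhammer R (n + 1)).eval (x + 1) - (descPochhammer R (n + 1)).eval x =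
      (n + 1) * (descPochhammer R n).eval x := by
  have eval_succ : (descPochhammer R (n + 1)).eval (x + 1) =
      (x + 1) * (descPochhammer R n).eval x := by
    simp [descPochhammer_succ_left]
  rw [eval_succ, descPochhammer_succ_eval]
  ring

lemma descPochhammer_eval_sub_eq_sum_Icc (n : ℕ) (x : R) {a b : ℕ} (hab : a ≤ b) :
    (descPochhammer R (n + 1)).eval (x + 1 - a) - (descPochhammer R (n + 1)).eval (x - b) =
      (n + 1) * ∑ r ∈ Finset.Icc a b, (descPochhammer R n).eval (x - r) := by
  induction b, hab using Nat.le_induction with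
  | base =>
    rw [Finset.Icc_self, Finset.sum_singleton, ← descPochhammer_eval_add_one_sub]
    ring_nf
  | succ b hab ih =>
    rw [Finset.sum_Icc_succ_top (by omega), mul_add, ← ih, ← descPochhammer_eval_add_one_sub]
    push_cast
    ring_nf

lemma det_eq_det_row_differences_of_col_zero_eq_one {n : ℕ}
    (M : Matrix (Fin (n + 1)) (Fin (n + 1)) R) (hM : ∀ i, M i 0 = 1) :
    M.det = (Matrix.of fun i j : Fin n ↦ M i.succ j.succ - M i.castSucc j.succ).det := by
  let N : Matrix (Fin (n + 1)) (Fin (n + 1)) R :=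
    Matrix.of (Fin.cons (M 0) fun i j ↦ M i.succ j - M i.castSucc j)
  have det_M : M.det = N.det :=
    Matrix.det_eq_of_forall_row_eq_smul_add_pred (fun _ ↦ 1) (by simp [N]) (by simp [N])
  have N_zero : N 0 0 = 1 := hM 0
  have N_succ (i : Fin n) : N i.succ 0 = 0 := by simp [N, hM]
  rw [det_M, Matrix.det_succ_column_zero, Fin.sum_univ_succ, Finset.sum_eq_zero]
  · simp only [N_zero, Fin.val_zero, pow_zero, one_mul, add_zero]
    rfl
  · simp [N_succ]

lemma det_of_sum_eq_sum_piFinset {ι κ : Type*} [Fintype ι] [DecidableEq ι]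
    (s : ι → Finset κ) (f : ι → κ → ι → R) :
    (Matrix.of fun i j ↦ ∑ r ∈ s i, f i r j).det =
      ∑ r ∈ Fintype.piFinset s, (Matrix.of fun i ↦ f i (r i)).det := by
  have rows : (Matrix.of fun i j ↦ ∑ r ∈ s i, f i r j) = fun i ↦ ∑ r ∈ s i, f i r := by
    ext i j
    simp
  rw [rows]
  exact Matrix.detRowAlternating.toMultilinearMap.map_sum_finset f s

variable [IsDomain R]

lemma det_vandermonde_eq_det_descPochhammer {n : ℕ} (v : Fin n → R) :
    (Matrix.vandermonde v).det =
      (Matrix.of fun i j : Fin n ↦ (descPochhammer R j).eval (v i)).det :=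
  Matrix.det_eval_matrixOfPolynomials_eq_det_vandermonde v (fun i ↦ descPochhammer R i)
    (fun i ↦ descPochhammer_natDegree R i) (fun i ↦ monic_descPochhammer R i)

lemma det_vandermonde_sub_eq_factorial_mul_sum {q : ℕ} {l : Fin (q + 1) → ℕ} (hl : Antitone l) :
    (Matrix.vandermonde fun i ↦ ((i : ℕ) : R) - l i).det =
      q ! * ∑ r ∈ Fintype.piFinset fun i : Fin q ↦ Finset.Icc (l i.succ) (l i.castSucc),
        (Matrix.vandermonde fun i ↦ ((i : ℕ) : R) - r i).det := by
  have row_difference (i j : Fin q) :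
      (descPochhammer R j.succ).eval (((i.succ : ℕ) : R) - l i.succ) -
          (descPochhammer R j.succ).eval (((i.castSucc : ℕ) : R) - l i.castSucc) =
        (((j : ℕ) : R) + 1) * ∑ r ∈ Finset.Icc (l i.succ) (l i.castSucc),
          (descPochhammer R j).eval (((i : ℕ) : R) - r) := by
    rw [← descPochhammer_eval_sub_eq_sum_Icc _ _ (hl i.castSucc_lt_succ.le)]
    simp
  have prod_eq_factorial : ∏ j : Fin q, (((j : ℕ) : R) + 1) = q ! := by
    rw [← Finset.prod_range_add_one_eq_factorial, Finset.prod_range]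
    push_cast
    rfl
  simp only [det_vandermonde_eq_det_descPochhammer]
  rw [det_eq_det_row_differences_of_col_zero_eq_one _ (by simp)]
  simp only [Matrix.of_apply, row_difference]
  rw [← prod_eq_factorial, ← det_of_sum_eq_sum_piFinset _ fun (i : Fin q) (r : ℕ) (j : Fin q) ↦
    (descPochhammer R j).eval (((i : ℕ) : R) - r)]
  exact Matrix.det_mul_row _ _

end Determinants

section YoungDiagrams

variable {μ ν : YoungDiagram} {i j q : ℕ}

lemma row_lt_colLen_zero (h : (i, j) ∈ μ) : i < μ.colLen 0 :=
  YoungDiagram.mem_iff_lt_colLen.1 (μ.up_left_mem le_rfl j.zero_le h)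

lemma rowLen_eq_zero_iff : μ.rowLen i = 0 ↔ μ.colLen 0 ≤ i := by
  rw [← not_lt, ← YoungDiagram.mem_iff_lt_colLen, YoungDiagram.mem_iff_lt_rowLen]
  omega

lemma le_iff_forall_rowLen_le : ν ≤ μ ↔ ∀ i, ν.rowLen i ≤ μ.rowLen i := by
  refine ⟨fun h i ↦ ?_, fun h ⟨i, j⟩ hc ↦ ?_⟩
  · by_contra! hlt
    exact (YoungDiagram.mem_iff_lt_rowLen.1 (h (YoungDiagram.mem_iff_lt_rowLen.2 hlt))).false
  · exact YoungDiagram.mem_iff_lt_rowLen.2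
      ((YoungDiagram.mem_iff_lt_rowLen.1 hc).trans_le (h i))

lemma eq_of_forall_rowLen_eq (h : ∀ i, ν.rowLen i = μ.rowLen i) : ν = μ :=
  le_antisymm (le_iff_forall_rowLen_le.2 fun i ↦ (h i).le)
    (le_iff_forall_rowLen_le.2 fun i ↦ (h i).ge)

lemma eq_bot_of_colLen_zero (h : μ.colLen 0 = 0) : μ = ⊥ :=
  eq_bot_iff.2 fun ⟨_, _⟩ hc ↦ absurd (row_lt_colLen_zero hc) (by omega)

lemma finite_Iic_youngDiagram (μ : YoungDiagram) : (Set.Iic μ).Finite :=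
  Set.Finite.of_injOn (f := YoungDiagram.cells) (t := μ.cells.powerset)
    (fun _ hν ↦ Finset.mem_powerset.2 (YoungDiagram.cells_subset_iff.2 hν))
    (fun _ _ _ _ h ↦ YoungDiagram.ext h) (Finset.finite_toSet _)

lemma prod_cells_eq_prod_rows {M : Type*} [CommMonoid M] (h : μ.colLen 0 ≤ q) (f : ℕ × ℕ → M) :
    ∏ c ∈ μ.cells, f c =
      ∏ i ∈ Finset.range q, ∏ j ∈ Finset.range (μ.rowLen i), f (i, j) := by
  refine Finset.prod_finset_product _ _ _ fun ⟨i, j⟩ ↦ ?_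
  simp only [YoungDiagram.mem_cells, Finset.mem_range, ← YoungDiagram.mem_iff_lt_rowLen]
  exact ⟨fun hc ↦ ⟨(row_lt_colLen_zero hc).trans_le h, hc⟩, And.right⟩

end YoungDiagrams

section Interlacing

variable {μ ν : YoungDiagram} {i j q : ℕ}

/-- `ν` interlaces with `μ`, i.e. `μ₀ ≥ ν₀ ≥ μ₁ ≥ ν₁ ≥ ⋯`; equivalently `μ / ν` is a horizontal
strip. These are the shapes left over when the largest letter is deleted from a tableau of shape
`μ`. -/
def Interlaces (ν μ : YoungDiagram) : Prop :=
  ∀ i, μ.rowLen (i + 1) ≤ ν.rowLen i ∧ ν.rowLen i ≤ μ.rowLen i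

lemma Interlaces.le (h : Interlaces ν μ) : ν ≤ μ :=
  le_iff_forall_rowLen_le.2 fun i ↦ (h i).2

lemma Interlaces.mem_of_succ_mem (h : Interlaces ν μ) (hc : (i + 1, j) ∈ μ) : (i, j) ∈ ν :=
  YoungDiagram.mem_iff_lt_rowLen.2 ((YoungDiagram.mem_iff_lt_rowLen.1 hc).trans_le (h i).1)

lemma Interlaces.of_forall_succ_mem (hle : ν ≤ μ)
    (hsucc : ∀ i j, (i + 1, j) ∈ μ → (i, j) ∈ ν) : Interlaces ν μ := by
  refine fun i ↦ ⟨?_, le_iff_forall_rowLen_le.1 hle i⟩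
  by_contra! hlt
  exact (YoungDiagram.mem_iff_lt_rowLen.1
    (hsucc i _ (YoungDiagram.mem_iff_lt_rowLen.2 hlt))).false

lemma finite_interlaces (μ : YoungDiagram) (q : ℕ) :
    {ν | Interlaces ν μ ∧ ν.colLen 0 ≤ q}.Finite :=
  (finite_Iic_youngDiagram μ).subset fun _ hν ↦ hν.1.le

/-- The finite set of diagrams with at most `q` rows that interlace with `μ`. -/
def interlacing (μ : YoungDiagram) (q : ℕ) : Finset YoungDiagram :=
  (finite_interlaces μ q).toFinset

lemma mem_interlacing : ν ∈ interlacing μ q ↔ Interlaces ν μ ∧ ν.colLen 0 ≤ q :=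
  (finite_interlaces μ q).mem_toFinset

lemma exists_rowLen_eq {r : Fin q → ℕ} (hr : Antitone r) :
    ∃ ν : YoungDiagram, ν.colLen 0 ≤ q ∧ ∀ i : Fin q, ν.rowLen i = r i := by
  refine ⟨.ofRowLens (List.ofFn r) hr.sortedGE_ofFn, ?_, fun i ↦ ?_⟩
  · by_contra! h
    simpa [YoungDiagram.mem_ofRowLens] using YoungDiagram.mem_iff_lt_colLen.2 h
  · simpa using YoungDiagram.rowLen_ofRowLens (hw := hr.sortedGE_ofFn) (i.cast (by simp))

lemma exists_mem_interlacing_rowLen_eq (h : μ.colLen 0 ≤ q + 1) {r : Fin q → ℕ}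
    (hr : ∀ i : Fin q, μ.rowLen (i + 1) ≤ r i ∧ r i ≤ μ.rowLen i) :
    ∃ ν ∈ interlacing μ q, ∀ i : Fin q, ν.rowLen i = r i := by
  have antitone_r : Antitone r := by
    refine antitone_iff_forall_lt.2 fun a b hab ↦ ?_
    calc r b ≤ μ.rowLen b := (hr b).2
      _ ≤ μ.rowLen (a + 1) := μ.rowLen_anti _ _ hab
      _ ≤ r a := (hr a).1
  obtain ⟨ν, colLen_ν, rowLen_ν⟩ := exists_rowLen_eq antitone_r
  refine ⟨ν, mem_interlacing.2 ⟨fun i ↦ ?_, colLen_ν⟩, rowLen_ν⟩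
  obtain hi | hi := lt_or_ge i q
  · exact rowLen_ν ⟨i, hi⟩ ▸ hr ⟨i, hi⟩
  · simp [rowLen_eq_zero_iff.2 (colLen_ν.trans hi),
      rowLen_eq_zero_iff.2 (h.trans (Nat.succ_le_succ hi))]

lemma sum_interlacing_eq_sum_piFinset {M : Type*} [AddCommMonoid M] (h : μ.colLen 0 ≤ q + 1)
    (f : (Fin q → ℕ) → M) :
    ∑ ν ∈ interlacing μ q, f (fun i ↦ ν.rowLen i) =
      ∑ r ∈ Fintype.piFinset fun i : Fin q ↦ Finset.Icc (μ.rowLen (i + 1)) (μ.rowLen i), f r := by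
  refine Finset.sum_nbij (fun ν i ↦ ν.rowLen i) (fun ν hν ↦ ?_) (fun ν hν ν' hν' heq ↦ ?_)
    (fun r hr ↦ ?_) fun _ _ ↦ rfl
  · simpa using fun i : Fin q ↦ (mem_interlacing.1 hν).1 i
  · refine eq_of_forall_rowLen_eq fun i ↦ ?_
    obtain hi | hi := lt_or_ge i q
    · exact congrFun heq ⟨i, hi⟩
    · rw [rowLen_eq_zero_iff.2 ((mem_interlacing.1 hν).2.trans hi),
        rowLen_eq_zero_iff.2 ((mem_interlacing.1 hν').2.trans hi)]
  · obtain ⟨ν, hν, rowLen_ν⟩ := exists_mem_interlacing_rowLen_eq h fun i ↦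
      Finset.mem_Icc.1 (Fintype.mem_piFinset.1 hr i)
    exact ⟨ν, hν, funext rowLen_ν⟩

end Interlacing

section Tableaux

variable {μ ν : YoungDiagram} {i j q : ℕ}

lemma row_le_entry (T : SemistandardYoungTableau μ) (h : (i, j) ∈ μ) : i ≤ T i j := by
  induction i with
  | zero => exact Nat.zero_le _
  | succ i ih =>
    exact (ih (μ.up_left_mem i.le_succ le_rfl h)).trans_lt (T.col_strict i.lt_add_one h)

/-- The semistandard tableaux of shape `μ` with all entries below `q`; `numSSYT μ q` counts them. -/
def boundedSSYT (μ : YoungDiagram) (q : ℕ) : Set (SemistandardYoungTableau μ) :=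
  {T | ∀ c ∈ μ.cells, T c.1 c.2 < q}

lemma mem_boundedSSYT {T : SemistandardYoungTableau μ} :
    T ∈ boundedSSYT μ q ↔ ∀ i j, (i, j) ∈ μ → T i j < q := by
  simp [boundedSSYT]

lemma numSSYT_eq_ncard (μ : YoungDiagram) (q : ℕ) : numSSYT μ q = (boundedSSYT μ q).ncard :=
  rfl

lemma finite_boundedSSYT (μ : YoungDiagram) (q : ℕ) : (boundedSSYT μ q).Finite := by
  refine Set.Finite.of_injOn (f := fun T (c : μ.cells) ↦ T c.1.1 c.1.2)
    (t := Set.pi Set.univ fun _ ↦ Set.Iio q) (fun T hT c _ ↦ hT c.1 c.2) (fun T _ T' _ heq ↦ ?_)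
    (Set.Finite.pi fun _ ↦ Set.finite_Iio q)
  ext i j
  by_cases hc : (i, j) ∈ μ
  · exact congrFun heq ⟨(i, j), hc⟩
  · rw [T.zeros hc, T'.zeros hc]

lemma numSSYT_bot (q : ℕ) : numSSYT ⊥ q = 1 := by
  refine Set.ncard_eq_one.2 ⟨default, Set.eq_singleton_iff_unique_mem.2 ⟨by simp, fun T _ ↦ ?_⟩⟩
  ext i j
  rw [T.zeros (YoungDiagram.notMem_bot _), SemistandardYoungTableau.zeros _ (by simp)]

lemma numSSYT_eq_zero_of_lt_colLen (h : q < μ.colLen 0) : numSSYT μ q = 0 := by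
  have hc : (q, 0) ∈ μ := YoungDiagram.mem_iff_lt_colLen.2 h
  have no_tableau : boundedSSYT μ q = ∅ := Set.eq_empty_of_forall_notMem fun T hT ↦
    (mem_boundedSSYT.1 hT q 0 hc).not_ge (row_le_entry T hc)
  rw [numSSYT_eq_ncard, no_tableau, Set.ncard_empty]

/-- The shape formed by the cells of `T` with entry below `q`. -/
def shapeBelow (T : SemistandardYoungTableau μ) (q : ℕ) : YoungDiagram where
  cells := μ.cells.filter fun c ↦ T c.1 c.2 < q
  isLowerSet := by
    rintro ⟨i, j⟩ ⟨i', j'⟩ ⟨hi : i' ≤ i, hj : j' ≤ j⟩ h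
    simp only [Finset.coe_filter, Set.mem_ofPred_eq, YoungDiagram.mem_cells] at h ⊢
    refine ⟨μ.up_left_mem hi hj h.1, ?_⟩
    calc T i' j' ≤ T i j' := T.col_weak hi (μ.up_left_mem le_rfl hj h.1)
      _ ≤ T i j := T.row_weak_of_le hj h.1
      _ < q := h.2

lemma mem_shapeBelow {T : SemistandardYoungTableau μ} :
    (i, j) ∈ shapeBelow T q ↔ (i, j) ∈ μ ∧ T i j < q := by
  rw [← YoungDiagram.mem_cells]
  simp [shapeBelow]

lemma shapeBelow_mem_interlacing {T : SemistandardYoungTableau μ}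
    (hT : T ∈ boundedSSYT μ (q + 1)) : shapeBelow T q ∈ interlacing μ q := by
  refine mem_interlacing.2 ⟨.of_forall_succ_mem ?_ fun i j hc ↦ ?_, ?_⟩
  · exact fun ⟨_, _⟩ hc ↦ (mem_shapeBelow.1 hc).1
  · refine mem_shapeBelow.2 ⟨μ.up_left_mem i.le_succ le_rfl hc, ?_⟩
    exact (T.col_strict i.lt_add_one hc).trans_le (Nat.le_of_lt_succ (mem_boundedSSYT.1 hT _ _ hc))
  · by_contra! h
    obtain ⟨hc, entry_lt⟩ := mem_shapeBelow.1 (YoungDiagram.mem_iff_lt_colLen.2 h)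
    exact entry_lt.not_ge (row_le_entry T hc)

/-- The restriction of a tableau of shape `μ` to a smaller shape `ν`. -/
def restrictSSYT (hle : ν ≤ μ) (T : SemistandardYoungTableau μ) : SemistandardYoungTableau ν where
  entry i j := if (i, j) ∈ ν then T i j else 0
  row_weak' {i j₁ j₂} hj h := by
    rw [if_pos h, if_pos (ν.up_left_mem le_rfl hj.le h)]
    exact T.row_weak hj (hle h)
  col_strict' {i₁ i₂ j} hi h := by
    rw [if_pos h, if_pos (ν.up_left_mem hi.le le_rfl h)]
    exact T.col_strict hi (hle h)
  zeros' h := if_neg h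

lemma restrictSSYT_apply (hle : ν ≤ μ) (T : SemistandardYoungTableau μ) (h : (i, j) ∈ ν) :
    restrictSSYT hle T i j = T i j :=
  if_pos h

/-- The extension of a tableau `S` of shape `ν` with entries below `q` to a shape `μ` with which `ν`
interlaces, by writing `q` in the new cells. -/
def extendSSYT (h : Interlaces ν μ) (S : SemistandardYoungTableau ν) (hS : S ∈ boundedSSYT ν q) :
    SemistandardYoungTableau μ where
  entry i j := if (i, j) ∈ ν then S i j else if (i, j) ∈ μ then q else 0
  row_weak' {i j₁ j₂} hj hμ := by
    rw [if_pos hμ, if_pos (μ.up_left_mem le_rfl hj.le hμ)]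
    split_ifs with h₁ h₂ h₂
    · exact S.row_weak hj h₂
    · exact (mem_boundedSSYT.1 hS _ _ h₁).le
    · exact absurd (ν.up_left_mem le_rfl hj.le h₂) h₁
    · exact le_rfl
  col_strict' {i₁ i₂ j} hi hμ := by
    have h₁ : (i₁, j) ∈ ν := h.mem_of_succ_mem (μ.up_left_mem hi le_rfl hμ)
    rw [if_pos h₁, if_pos hμ]
    split_ifs with h₂
    · exact S.col_strict hi h₂
    · exact mem_boundedSSYT.1 hS _ _ h₁
  zeros' hμ := by rw [if_neg fun hν ↦ hμ (h.le hν), if_neg hμ]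

section Extension

variable (h : Interlaces ν μ) (S : SemistandardYoungTableau ν) (hS : S ∈ boundedSSYT ν q)

lemma extendSSYT_of_mem (hν : (i, j) ∈ ν) : extendSSYT h S hS i j = S i j :=
  if_pos hν

lemma extendSSYT_of_notMem (hν : (i, j) ∉ ν) (hμ : (i, j) ∈ μ) : extendSSYT h S hS i j = q :=
  (if_neg hν).trans (if_pos hμ)

lemma extendSSYT_mem_boundedSSYT : extendSSYT h S hS ∈ boundedSSYT μ (q + 1) := by
  refine mem_boundedSSYT.2 fun i j hμ ↦ ?_
  by_cases hν : (i, j) ∈ ν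
  · rw [extendSSYT_of_mem h S hS hν]
    exact (mem_boundedSSYT.1 hS i j hν).trans q.lt_add_one
  · rw [extendSSYT_of_notMem h S hS hν hμ]
    exact q.lt_add_one

lemma shapeBelow_extendSSYT : shapeBelow (extendSSYT h S hS) q = ν := by
  ext ⟨i, j⟩
  rw [YoungDiagram.mem_cells, YoungDiagram.mem_cells, mem_shapeBelow]
  refine ⟨fun ⟨hμ, entry_lt⟩ ↦ ?_, fun hν ↦ ⟨h.le hν, ?_⟩⟩
  · by_contra hν
    exact entry_lt.ne (extendSSYT_of_notMem h S hS hν hμ)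
  · rw [extendSSYT_of_mem h S hS hν]
    exact mem_boundedSSYT.1 hS i j hν

lemma restrictSSYT_extendSSYT : restrictSSYT h.le (extendSSYT h S hS) = S := by
  ext i j
  by_cases hν : (i, j) ∈ ν
  · rw [restrictSSYT_apply _ _ hν, extendSSYT_of_mem h S hS hν]
  · rw [SemistandardYoungTableau.zeros _ hν, S.zeros hν]

end Extension

lemma entry_eq_of_notMem_shapeBelow {T : SemistandardYoungTableau μ}
    (hT : T ∈ boundedSSYT μ (q + 1)) (hμ : (i, j) ∈ μ) (hν : (i, j) ∉ shapeBelow T q) :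
    T i j = q := by
  have le_q := Nat.le_of_lt_succ (mem_boundedSSYT.1 hT i j hμ)
  have q_le := not_lt.1 fun hlt ↦ hν (mem_shapeBelow.2 ⟨hμ, hlt⟩)
  exact le_antisymm le_q q_le

lemma restrictSSYT_injOn (hle : ν ≤ μ) :
    Set.InjOn (restrictSSYT hle) {T ∈ boundedSSYT μ (q + 1) | shapeBelow T q = ν} := by
  rintro T ⟨hT, rfl⟩ T' ⟨hT', shape_eq⟩ heq
  ext i j
  by_cases hμ : (i, j) ∈ μ
  · by_cases hν : (i, j) ∈ shapeBelow T q
    · rw [← restrictSSYT_apply hle T hν, heq, restrictSSYT_apply hle T' hν]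
    · rw [entry_eq_of_notMem_shapeBelow hT hμ hν,
        entry_eq_of_notMem_shapeBelow hT' hμ (shape_eq ▸ hν)]
  · rw [T.zeros hμ, T'.zeros hμ]

lemma ncard_shapeBelow_eq (h : Interlaces ν μ) (q : ℕ) :
    {T ∈ boundedSSYT μ (q + 1) | shapeBelow T q = ν}.ncard = numSSYT ν q := by
  refine Set.ncard_congr (fun T _ ↦ restrictSSYT h.le T) ?_
    (fun T T' hT hT' ↦ restrictSSYT_injOn h.le hT hT')
    fun S hS ↦ ⟨extendSSYT h S hS, ⟨extendSSYT_mem_boundedSSYT h S hS,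
      shapeBelow_extendSSYT h S hS⟩, restrictSSYT_extendSSYT h S hS⟩
  rintro T ⟨_, rfl⟩
  refine mem_boundedSSYT.2 fun i j hν ↦ ?_
  rw [restrictSSYT_apply _ _ hν]
  exact (mem_shapeBelow.1 hν).2

theorem numSSYT_succ (μ : YoungDiagram) (q : ℕ) :
    numSSYT μ (q + 1) = ∑ ν ∈ interlacing μ q, numSSYT ν q := by
  classical
  have hfin := finite_boundedSSYT μ (q + 1)
  rw [numSSYT_eq_ncard, Set.ncard_eq_toFinset_card _ hfin,
    Finset.card_eq_sum_card_fiberwise (f := fun T ↦ shapeBelow T q) (t := interlacing μ q)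
      fun T hT ↦ shapeBelow_mem_interlacing (hfin.mem_toFinset.1 hT)]
  refine Finset.sum_congr rfl fun ν hν ↦ ?_
  rw [← ncard_shapeBelow_eq (mem_interlacing.1 hν).1, ← Set.ncard_coe_finset]
  simp

theorem numSSYT_mul_prod_factorial {q : ℕ} {μ : YoungDiagram} (h : μ.colLen 0 ≤ q) :
    (numSSYT μ q : ℝ) * ∏ k ∈ Finset.range q, (k ! : ℝ) =
      (Matrix.vandermonde fun i : Fin q ↦ ((i : ℕ) : ℝ) - μ.rowLen i).det := by
  induction q generalizing μ with
  | zero => simp [eq_bot_of_colLen_zero (Nat.le_zero.1 h), numSSYT_bot]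
  | succ q ih =>
    have antitone_rowLen : Antitone fun i : Fin (q + 1) ↦ μ.rowLen i :=
      fun a b hab ↦ μ.rowLen_anti a b hab
    have sum_over_interlacing := sum_interlacing_eq_sum_piFinset h fun r ↦
      (Matrix.vandermonde fun i ↦ ((i : ℕ) : ℝ) - r i).det
    calc (numSSYT μ (q + 1) : ℝ) * ∏ k ∈ Finset.range (q + 1), (k ! : ℝ)
      _ = q ! * ∑ ν ∈ interlacing μ q, numSSYT ν q * ∏ k ∈ Finset.range q, (k ! : ℝ) := by
        rw [numSSYT_succ, Finset.prod_range_succ, ← Finset.sum_mul]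
        push_cast
        ring
      _ = q ! * ∑ ν ∈ interlacing μ q,
            (Matrix.vandermonde fun i : Fin q ↦ ((i : ℕ) : ℝ) - ν.rowLen i).det := by
        rw [Finset.sum_congr rfl fun ν hν ↦ ih (mem_interlacing.1 hν).2]
      _ = (Matrix.vandermonde fun i : Fin (q + 1) ↦ ((i : ℕ) : ℝ) - μ.rowLen i).det := by
        rw [sum_over_interlacing, det_vandermonde_sub_eq_factorial_mul_sum antitone_rowLen]
        rfl

end Tableaux

section HooksAndContents

variable {μ : YoungDiagram} {i j q : ℕ}

lemma hookLen_pos (h : (i, j) ∈ μ) : 0 < hookLen μ (i, j) := by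
  have hrow := YoungDiagram.mem_iff_lt_rowLen.1 h
  have hcol := YoungDiagram.mem_iff_lt_colLen.1 h
  simp only [hookLen]
  omega

lemma colLen_eq_succ_of_mem_Ico {m : ℕ} (h : j ∈ Finset.Ico (μ.rowLen (m + 1)) (μ.rowLen m)) :
    μ.colLen j = m + 1 := by
  obtain ⟨rowLen_le, lt_rowLen⟩ := Finset.mem_Ico.1 h
  have lt_colLen : m < μ.colLen j :=
    YoungDiagram.mem_iff_lt_colLen.1 (YoungDiagram.mem_iff_lt_rowLen.2 lt_rowLen)
  have colLen_le : ¬ m + 1 < μ.colLen j := by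
    rwa [← YoungDiagram.mem_iff_lt_colLen, YoungDiagram.mem_iff_lt_rowLen, not_lt]
  omega

lemma factorial_mul_prod_Ico_sub_add {a b n : ℕ} (m : ℕ) (hab : a ≤ b) (hbn : b ≤ n) :
    (n - b + m)! * ∏ j ∈ Finset.Ico a b, (n - j + m) = (n - a + m)! := by
  have prod_eq : ∏ j ∈ Finset.Ico a b, (n - j + m) = (n - a + m).descFactorial (b - a) := by
    rw [Nat.descFactorial_eq_prod_range, Finset.prod_Ico_eq_prod_range]
    exact Finset.prod_congr rfl fun j hj ↦ by have := Finset.mem_range.1 hj; omega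
  rw [prod_eq, show n - b + m = n - a + m - (b - a) by omega,
    Nat.factorial_mul_descFactorial (by omega)]

lemma prod_hookLen_Ico_mul_prod_Ioc (μ : YoungDiagram) {i m : ℕ} (him : i ≤ m) :
    (∏ j ∈ Finset.Ico (μ.rowLen m) (μ.rowLen i), hookLen μ (i, j)) *
        ∏ k ∈ Finset.Ioc i m, (μ.rowLen i - μ.rowLen k + (k - i)) =
      (μ.rowLen i - μ.rowLen m + (m - i))! := by
  induction m, him using Nat.le_induction with
  | base => simp
  | succ m him ih =>
    have hm : μ.rowLen (m + 1) ≤ μ.rowLen m := μ.rowLen_anti _ _ m.le_succ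
    have hi : μ.rowLen m ≤ μ.rowLen i := μ.rowLen_anti _ _ him
    have hook_eq (j : ℕ) (hj : j ∈ Finset.Ico (μ.rowLen (m + 1)) (μ.rowLen m)) :
        hookLen μ (i, j) = μ.rowLen i - j + (m - i) := by
      have := Finset.mem_Ico.1 hj
      simp only [hookLen, colLen_eq_succ_of_mem_Ico hj]
      omega
    rw [← Finset.prod_Ico_consecutive _ hm hi, Finset.prod_Ioc_succ_top (by omega),
      Finset.prod_congr rfl hook_eq,
      show μ.rowLen i - μ.rowLen (m + 1) + (m + 1 - i) =
        μ.rowLen i - μ.rowLen (m + 1) + (m - i) + 1 by omega,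
      Nat.factorial_succ, ← factorial_mul_prod_Ico_sub_add (m - i) hm hi, ← ih]
    ring

lemma prod_row_hookLen_mul_prod_Ioo (h : μ.colLen 0 ≤ q) (hi : i < q) :
    (∏ j ∈ Finset.range (μ.rowLen i), hookLen μ (i, j)) *
        ∏ k ∈ Finset.Ioo i q, (μ.rowLen i - μ.rowLen k + (k - i)) =
      (μ.rowLen i + (q - 1 - i))! := by
  have hook := prod_hookLen_Ico_mul_prod_Ioc μ hi.le
  rw [← Finset.Ioo_insert_right hi, Finset.prod_insert (by simp), rowLen_eq_zero_iff.2 h,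
    ← Finset.range_eq_Ico, mul_left_comm,
    show μ.rowLen i - 0 + (q - i) = μ.rowLen i + (q - 1 - i) + 1 by omega,
    Nat.factorial_succ] at hook
  exact Nat.eq_of_mul_eq_mul_left (Nat.succ_pos _) hook

lemma prod_row_content_mul_factorial (hi : i < q) (n : ℕ) :
    (∏ j ∈ Finset.range n, ((q : ℝ) + j - i)) * (q - 1 - i)! = (n + (q - 1 - i))! := by
  have prod_eq : ∏ j ∈ Finset.range n, ((q : ℝ) + j - i) = (q - 1 - i + 1).ascFactorial n := by
    rw [Nat.ascFactorial_eq_prod_range, show q - 1 - i + 1 = q - i by omega]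
    push_cast [hi.le]
    exact Finset.prod_congr rfl fun j _ ↦ by ring
  rw [prod_eq, mul_comm, add_comm n]
  exact_mod_cast Nat.factorial_mul_ascFactorial _ _

lemma det_vandermonde_rowLen (μ : YoungDiagram) (q : ℕ) :
    (Matrix.vandermonde fun i : Fin q ↦ ((i : ℕ) : ℝ) - μ.rowLen i).det =
      ∏ i ∈ Finset.range q, ∏ k ∈ Finset.Ioo i q,
        ((μ.rowLen i - μ.rowLen k + (k - i) : ℕ) : ℝ) := by
  rw [Matrix.det_vandermonde, Finset.prod_range]
  refine Finset.prod_congr rfl fun i _ ↦ ?_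
  rw [← Fin.map_valEmbedding_Ioi, Finset.prod_map]
  refine Finset.prod_congr rfl fun k hk ↦ ?_
  have hik : (i : ℕ) ≤ k := (Finset.mem_Ioi.1 hk).le
  simp only [Fin.valEmbedding_apply]
  push_cast [hik, μ.rowLen_anti _ _ hik]
  ring

lemma prod_content_mul_prod_factorial (h : μ.colLen 0 ≤ q) :
    (∏ c ∈ μ.cells, ((q : ℝ) + c.2 - c.1)) * ∏ k ∈ Finset.range q, (k ! : ℝ) =
      hookProd μ * (Matrix.vandermonde fun i : Fin q ↦ ((i : ℕ) : ℝ) - μ.rowLen i).det := by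
  rw [hookProd, det_vandermonde_rowLen, prod_cells_eq_prod_rows h, prod_cells_eq_prod_rows h,
    ← Finset.prod_range_reflect (fun k ↦ (k ! : ℝ)), Nat.cast_prod, ← Finset.prod_mul_distrib,
    ← Finset.prod_mul_distrib]
  refine Finset.prod_congr rfl fun i hi ↦ ?_
  rw [prod_row_content_mul_factorial (Finset.mem_range.1 hi),
    ← prod_row_hookLen_mul_prod_Ioo h (Finset.mem_range.1 hi)]
  push_cast
  rfl

lemma prod_content_eq_zero_of_lt_colLen (h : q < μ.colLen 0) :
    ∏ c ∈ μ.cells, ((q : ℝ) + c.2 - c.1) = 0 :=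
  Finset.prod_eq_zero (YoungDiagram.mem_iff_lt_colLen.2 h : (q, 0) ∈ μ) (by simp)

lemma hookProd_ne_zero (μ : YoungDiagram) : hookProd μ ≠ 0 :=
  Finset.prod_ne_zero_iff.2 fun ⟨_, _⟩ hc ↦ (hookLen_pos hc).ne'

lemma pochPart_eq_prod_content (x : ℝ) (μ : YoungDiagram) :
    pochPart x μ = ∏ c ∈ μ.cells, (x + c.2 - c.1) := by
  rw [prod_cells_eq_prod_rows le_rfl]
  exact Finset.prod_congr rfl fun i _ ↦ Finset.prod_congr rfl fun j _ ↦ by ring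

theorem numSSYT_mul_hookProd (μ : YoungDiagram) (q : ℕ) :
    (numSSYT μ q : ℝ) * hookProd μ = ∏ c ∈ μ.cells, ((q : ℝ) + c.2 - c.1) := by
  obtain h | h := le_or_gt (μ.colLen 0) q
  · have prod_factorial_ne_zero : ∏ k ∈ Finset.range q, (k ! : ℝ) ≠ 0 :=
      Finset.prod_ne_zero_iff.2 fun k _ ↦ Nat.cast_ne_zero.2 k.factorial_ne_zero
    apply mul_right_cancel₀ prod_factorial_ne_zero
    rw [prod_content_mul_prod_factorial h, ← numSSYT_mul_prod_factorial h]
    ring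
  · rw [numSSYT_eq_zero_of_lt_colLen h, prod_content_eq_zero_of_lt_colLen h, Nat.cast_zero,
      zero_mul]

end HooksAndContents

theorem statement18_general (q : ℕ) (μ : YoungDiagram) :
    (numSSYT μ q : ℝ) =
      ∏ c ∈ μ.cells, (((q : ℝ) + c.2 - c.1) / (hookLen μ c : ℝ)) ∧
    (numSSYT μ q : ℝ) = pochPart (q : ℝ) μ / (hookProd μ : ℝ) := by
  have numSSYT_eq : (numSSYT μ q : ℝ) =
      (∏ c ∈ μ.cells, ((q : ℝ) + c.2 - c.1)) / hookProd μ :=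
    eq_div_of_mul_eq (Nat.cast_ne_zero.2 (hookProd_ne_zero μ)) (numSSYT_mul_hookProd μ q)
  constructor
  · rw [numSSYT_eq, hookProd, Nat.cast_prod, Finset.prod_div_distrib]
  · rw [numSSYT_eq, pochPart_eq_prod_content]

/-- the hook content formula.  For a partition `λ` with at most
`q` parts, the number of semistandard Young tableaux of shape `λ` with entries
from an alphabet of size `q` equals `∏_{(i,j)∈λ} (q + j − i)/h^λ_{ij} = (q)_λ/h^λ`. -/
theorem statement18 (q : ℕ) (hq : 1 ≤ q) (μ : YoungDiagram) (hμ : μ.colLen 0 ≤ q) :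
    (numSSYT μ q : ℝ) =
      ∏ c ∈ μ.cells, (((q : ℝ) + c.2 - c.1) / (hookLen μ c : ℝ)) ∧
    (numSSYT μ q : ℝ) = pochPart (q : ℝ) μ / (hookProd μ : ℝ) :=
  statement18_general q μ

end
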